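/- Let X ⊆ ℕ^d be a monotone set, Q a complex polynomial in d variables, and φ a multiplier of H_d whose Taylor coefficients satisfy φ̂(n) = Q̂(n) for every n ∈ X. Then ‖Q(M_z^X)‖ ≤ ‖φ‖_{M(H_d)}, where the left-hand side is the operator norm on H_d(X). -/

import Mathlib

open scoped BigOperators ComplexConjugate

noncomputable section

namespace DruryArveson

/-- Multi-indices. -/
abbrev Idx (d : ℕ) := Fin d → ℕ

/-- The weight `β(n) = |n|!/n!`. -/
def beta (d : ℕ) (n : Idx d) : ℝ :=
  ((∑ j, n j).factorial : ℝ) / ∏ j, ((n j).factorial : ℝ)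

/-- standard basis multi-index `e_j`. -/
def e (d : ℕ) (j : Fin d) : Idx d := fun i => if i = j then 1 else 0

/-- A set `X ⊆ ℕ^d` is monotone if its complement is shift invariant. -/
def MonotoneSet (d : ℕ) (X : Set (Idx d)) : Prop :=
  ∀ n, n ∉ X → ∀ j, n + e d j ∉ X

/-- membership in the Drury–Arveson space (coefficientwise). -/
def MemHd (d : ℕ) (a : Idx d → ℂ) : Prop :=
  Summable fun n => ‖a n‖ ^ 2 / beta d n

/-- the Drury–Arveson norm. -/
def hdNorm (d : ℕ) (a : Idx d → ℂ) : ℝ :=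
  Real.sqrt (∑' n, ‖a n‖ ^ 2 / beta d n)

/-- the Drury–Arveson inner product. -/
def hdInner (d : ℕ) (a b : Idx d → ℂ) : ℂ :=
  ∑' n, a n * conj (b n) / (beta d n : ℂ)

/-- membership in `H_d(X)`. -/
def MemHdX (d : ℕ) (X : Set (Idx d)) (a : Idx d → ℂ) : Prop :=
  (∀ n ∉ X, a n = 0) ∧ MemHd d a

/-- membership in `ℓ²(X, β)`. -/
def MemL2 (d : ℕ) (X : Set (Idx d)) (g : Idx d → ℂ) : Prop :=
  (∀ n ∉ X, g n = 0) ∧ Summable fun n => ‖g n‖ ^ 2 * beta d n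

/-- the norm of `ℓ²(ℕ^d, β)`. -/
def l2Norm (d : ℕ) (g : Idx d → ℂ) : ℝ :=
  Real.sqrt (∑' n, ‖g n‖ ^ 2 * beta d n)

/-- the inner product of `ℓ²(ℕ^d, β)`. -/
def l2Inner (d : ℕ) (g h : Idx d → ℂ) : ℂ :=
  ∑' n, g n * conj (h n) * (beta d n : ℂ)

/-- the compressed backshift `B_j^X = P_X B_j|_{ℓ²(X,β)}`. -/
def BXop (d : ℕ) (X : Set (Idx d)) (j : Fin d) (g : Idx d → ℂ) : Idx d → ℂ :=
  X.indicator fun n => g (n + e d j)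

/-- ordered power `(T_1)^{k_1} ∘ ⋯ ∘ (T_d)^{k_d}` of a `d`-tuple of maps. -/
def opPow (d : ℕ) {α : Type*} (T : Fin d → (α → α)) (k : Idx d) : α → α :=
  (List.ofFn fun j => (T j)^[k j]).foldr (· ∘ ·) id

/-- multiplication by `z_j` on coefficients. -/
def Mop (d : ℕ) (j : Fin d) (a : Idx d → ℂ) : Idx d → ℂ :=
  fun n => if 0 < n j then a (n - e d j) else 0

/-- the compressed multiplication `M_j^X = P_X M_j|_{H_d(X)}`. -/
def MopX (d : ℕ) (X : Set (Idx d)) (j : Fin d) (a : Idx d → ℂ) : Idx d → ℂ :=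
  X.indicator (Mop d j a)

/-- the Taylor coefficients of a polynomial of `d` variables. -/
def Qhat (d : ℕ) (Q : MvPolynomial (Fin d) ℂ) (n : Idx d) : ℂ :=
  Q.coeff (Finsupp.equivFunOnFinite.symm n)

/-- `Q(T)` for a `d`-tuple of maps on the coefficient space. -/
def polyOp (d : ℕ) (Q : MvPolynomial (Fin d) ℂ)
    (T : Fin d → ((Idx d → ℂ) → (Idx d → ℂ))) (a : Idx d → ℂ) : Idx d → ℂ :=
  fun n => ∑ k ∈ Q.support, Q.coeff k * opPow d T (⇑k) a n

/-- operator norm of a map with respect to the `ℓ²(X,β)` norm. -/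
def opNormL2 (d : ℕ) (X : Set (Idx d)) (T : (Idx d → ℂ) → (Idx d → ℂ)) : ℝ :=
  sInf {C | 0 ≤ C ∧ ∀ g, MemL2 d X g → l2Norm d (T g) ≤ C * l2Norm d g}

/-- operator norm of a map with respect to the `H_d(X)` norm. -/
def opNormHdX (d : ℕ) (X : Set (Idx d)) (T : (Idx d → ℂ) → (Idx d → ℂ)) : ℝ :=
  sInf {C | 0 ≤ C ∧ ∀ a, MemHdX d X a → hdNorm d (T a) ≤ C * hdNorm d a}

/-- coefficients of the product `φ · f` of two power series. -/
def mconv (d : ℕ) (φ a : Idx d → ℂ) (m : Idx d) : ℂ :=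
  ∑ k ∈ Finset.Iic m, φ k * a (m - k)

/-- `φ` is a multiplier of `H_d`. -/
def IsMultiplier (d : ℕ) (φ : Idx d → ℂ) : Prop :=
  ∀ a, MemHd d a → MemHd d (mconv d φ a)

/-- the multiplier norm `‖φ‖_{M(H_d)}`. -/
def multNorm (d : ℕ) (φ : Idx d → ℂ) : ℝ :=
  sInf {C | 0 ≤ C ∧ ∀ a, MemHd d a → hdNorm d (mconv d φ a) ≤ C * hdNorm d a}

/-- `A^n = A_1^{n_1} ⋯ A_d^{n_d}` for a tuple of bounded operators. -/
def ApowCLM (d : ℕ) {H : Type*} [NormedAddCommGroup H] [NormedSpace ℂ H]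
    (A : Fin d → H →L[ℂ] H) (n : Idx d) : H →L[ℂ] H :=
  (List.ofFn fun j => A j ^ n j).prod

/-- `Q(A) = ∑ c_k A^k` for a tuple of bounded operators. -/
def QevalCLM (d : ℕ) {H : Type*} [NormedAddCommGroup H] [NormedSpace ℂ H]
    (A : Fin d → H →L[ℂ] H) (Q : MvPolynomial (Fin d) ℂ) : H →L[ℂ] H :=
  ∑ k ∈ Q.support, Q.coeff k • ApowCLM d A ⇑k

/-- monomial `z^n`. -/
def mpow (d : ℕ) (z : Fin d → ℂ) (n : Idx d) : ℂ := ∏ j, z j ^ n j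

/-!
Since the complement of `X` is stable under every shift, `f ↦ P_X f` intertwines `M_j` with `M_j^X`,
so `Q(M_z^X) f = P_X (Q f)` for `f ∈ H_d(X)`. The `n`-th coefficient of a product `φ f` only
involves the coefficients of `φ` at indices `k ≤ n`, which lie in `X` when `n` does; hence
`P_X (Q f) = P_X (φ f)`, and `P_X` is a contraction. The closed graph theorem makes
multiplication by `φ` bounded, so that `‖φ‖_{M(H_d)}` is a genuine infimum rather than the junk
value `sInf ∅ = 0`.
-/

variable {d : ℕ} {X : Set (Idx d)}

section MultiIndices

theorem e_le_iff {j : Fin d} {n : Idx d} : e d j ≤ n ↔ 0 < n j := by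
  refine ⟨fun h => show 1 ≤ n j by simpa [e] using h j, fun h i => ?_⟩
  by_cases hi : i = j
  · subst hi
    simpa [e] using Nat.succ_le_of_lt h
  · simp [e, hi]

theorem sum_nsmul_e (k : Idx d) : ∑ j, k j • e d j = k := by
  funext i
  simp [e]

theorem exists_add_e_eq_of_covBy {m n : Idx d} (h : m ⋖ n) : ∃ j, m + e d j = n := by
  obtain ⟨j, hj, hne⟩ := Pi.covBy_iff.1 h
  refine ⟨j, funext fun i => ?_⟩
  by_cases hi : i = j
  · subst hi
    simpa [e] using Order.covBy_iff_add_one_eq.1 hj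
  · simpa [e, hi] using hne i hi

theorem MonotoneSet.isLowerSet (hX : MonotoneSet d X) : IsLowerSet X := by
  have notMem_mono : Monotone (· ∉ X) := (monotone_iff_forall_covBy _).2 fun m n hmn hm => by
    obtain ⟨j, rfl⟩ := exists_add_e_eq_of_covBy hmn
    exact hX m hm j
  intro n k hkn hn
  by_contra hk
  exact notMem_mono hkn hk hn

end MultiIndices

section OrderedPowers

theorem semiconj_opPow {α β : Type*} {f : α → β} {S : Fin d → α → α} {T : Fin d → β → β}
    (h : ∀ j, Function.Semiconj f (S j) (T j)) (k : Idx d) :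
    Function.Semiconj f (opPow d S k) (opPow d T k) := by
  unfold opPow
  rw [List.ofFn_eq_map, List.ofFn_eq_map]
  induction List.finRange d with
  | nil => exact Function.Semiconj.id_right
  | cons j l ih => exact ((h j).iterate_right (k j)).comp_right ih

theorem opPow_of_map_add {α : Type*} {T : Idx d → α → α} (map_zero : T 0 = id)
    (map_add : ∀ k l, T (k + l) = T k ∘ T l) (k : Idx d) :
    opPow d (fun j => T (e d j)) k = T k := by
  let ρ : Multiplicative (Idx d) →* Function.End α :=
    { toFun := fun k => T k.toAdd, map_one' := map_zero, map_mul' := map_add }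
  -- In the monoid of self-maps of `α`, `opPow` is a product of powers.
  change (List.ofFn fun j => ρ (.ofAdd (e d j)) ^ k j).prod = ρ (.ofAdd k)
  calc (List.ofFn fun j => ρ (.ofAdd (e d j)) ^ k j).prod
      = ρ (List.ofFn fun j => Multiplicative.ofAdd (k j • e d j)).prod := by
        simp only [map_list_prod, List.map_ofFn, Function.comp_def, ofAdd_nsmul, map_pow]
    _ = ρ (.ofAdd (∑ j, k j • e d j)) := by rw [List.prod_ofFn, ofAdd_sum]
    _ = ρ (.ofAdd k) := by rw [sum_nsmul_e]

end OrderedPowers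

section Multiplication

open scoped Classical in
/-- Multiplication by the monomial `z^k`, acting on Taylor coefficients. -/
def mulMonomial (k : Idx d) (a : Idx d → ℂ) : Idx d → ℂ :=
  fun n => if k ≤ n then a (n - k) else 0

theorem mulMonomial_zero : mulMonomial (0 : Idx d) = id := by
  funext a n
  simp [mulMonomial]

theorem mulMonomial_add (k l : Idx d) :
    mulMonomial (k + l) = mulMonomial k ∘ mulMonomial l := by
  funext a n
  by_cases hk : k ≤ n
  · simp only [mulMonomial, Function.comp_apply, if_pos hk, tsub_tsub]
    rw [le_tsub_iff_left hk]
  · have hkl : ¬k + l ≤ n := fun h => hk (le_self_add.trans h)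
    simp only [mulMonomial, Function.comp_apply, if_neg hk, if_neg hkl]

theorem Mop_eq_mulMonomial (j : Fin d) : Mop d j = mulMonomial (e d j) := by
  funext a n
  simp only [Mop, mulMonomial, e_le_iff]

theorem opPow_Mop (k : Idx d) : opPow d (Mop d) k = mulMonomial k := by
  rw [funext Mop_eq_mulMonomial]
  exact opPow_of_map_add mulMonomial_zero mulMonomial_add k

theorem Qhat_coe (Q : MvPolynomial (Fin d) ℂ) (k : Fin d →₀ ℕ) : Qhat d Q k = Q.coeff k := by
  rw [Qhat, Finsupp.equivFunOnFinite_symm_coe]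

theorem polyOp_Mop (Q : MvPolynomial (Fin d) ℂ) (a : Idx d → ℂ) :
    polyOp d Q (Mop d) a = mconv d (Qhat d Q) a := by
  classical
  funext n
  simp only [polyOp, mconv, opPow_Mop, mulMonomial, mul_ite, mul_zero, ← Finset.sum_filter]
  refine Finset.sum_of_injOn (fun k => ⇑k) DFunLike.coe_injective.injOn ?_ ?_ ?_
  · intro k hk
    exact Finset.mem_coe.2 (Finset.mem_Iic.2 (Finset.mem_filter.1 hk).2)
  · intro k hkn hk
    suffices Qhat d Q k = 0 by rw [this, zero_mul]
    by_contra hQ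
    exact hk ⟨Finsupp.equivFunOnFinite.symm k, Finset.mem_coe.2 (Finset.mem_filter.2
      ⟨MvPolynomial.mem_support_iff.2 hQ, Finset.mem_Iic.1 hkn⟩), rfl⟩
  · intro k _
    rw [Qhat_coe]

end Multiplication

section Compression

theorem semiconj_indicator_Mop_MopX (hX : MonotoneSet d X) (j : Fin d) :
    Function.Semiconj X.indicator (Mop d j) (MopX d X j) := by
  refine fun a => Set.indicator_congr fun n hn => ?_
  have hmem : n - e d j ∈ X := hX.isLowerSet tsub_le_self hn
  simp only [Mop, Set.indicator_of_mem hmem]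

theorem polyOp_MopX_indicator (hX : MonotoneSet d X) (Q : MvPolynomial (Fin d) ℂ)
    (a : Idx d → ℂ) :
    polyOp d Q (MopX d X) (X.indicator a) = X.indicator (polyOp d Q (Mop d) a) := by
  funext n
  simp only [polyOp, ← semiconj_opPow (semiconj_indicator_Mop_MopX hX) _ a]
  by_cases hn : n ∈ X
  · simp only [Set.indicator_of_mem hn, polyOp]
  · simp only [Set.indicator_of_notMem hn, mul_zero, Finset.sum_const_zero]

theorem indicator_mconv_congr (hX : IsLowerSet X) {φ ψ : Idx d → ℂ} (h : Set.EqOn φ ψ X)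
    (a : Idx d → ℂ) : X.indicator (mconv d φ a) = X.indicator (mconv d ψ a) :=
  Set.indicator_congr fun _ hn =>
    Finset.sum_congr rfl fun k hk => by rw [h (hX (Finset.mem_Iic.1 hk) hn)]

theorem polyOp_MopX_eq_indicator_mconv (hX : MonotoneSet d X) {Q : MvPolynomial (Fin d) ℂ}
    {φ : Idx d → ℂ} (hφQ : Set.EqOn φ (Qhat d Q) X) {a : Idx d → ℂ} (ha : ∀ n ∉ X, a n = 0) :
    polyOp d Q (MopX d X) a = X.indicator (mconv d φ a) := by
  have ha_supp : X.indicator a = a :=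
    Set.indicator_eq_self.2 fun n hn => by_contra fun hnX => hn (ha n hnX)
  calc polyOp d Q (MopX d X) a
      = polyOp d Q (MopX d X) (X.indicator a) := by rw [ha_supp]
    _ = X.indicator (polyOp d Q (Mop d) a) := polyOp_MopX_indicator hX Q a
    _ = X.indicator (mconv d (Qhat d Q) a) := by rw [polyOp_Mop]
    _ = X.indicator (mconv d φ a) := (indicator_mconv_congr hX.isLowerSet hφQ a).symm

end Compression

section WeightedNorm

theorem beta_pos (n : Idx d) : 0 < beta d n :=
  div_pos (Nat.cast_pos.2 (Nat.factorial_pos _))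
    (Finset.prod_pos fun _ _ => Nat.cast_pos.2 (Nat.factorial_pos _))

theorem hdNorm_mono {a b : Idx d → ℂ} (hb : MemHd d b) (hab : ∀ n, ‖a n‖ ≤ ‖b n‖) :
    hdNorm d a ≤ hdNorm d b := by
  have hle (n : Idx d) : ‖a n‖ ^ 2 / beta d n ≤ ‖b n‖ ^ 2 / beta d n :=
    div_le_div_of_nonneg_right (pow_le_pow_left₀ (norm_nonneg _) (hab n) 2) (beta_pos n).le
  have hnonneg (n : Idx d) : 0 ≤ ‖a n‖ ^ 2 / beta d n :=
    div_nonneg (sq_nonneg _) (beta_pos n).le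
  exact Real.sqrt_le_sqrt ((Summable.of_nonneg_of_le hnonneg hle hb).tsum_le_tsum hle hb)

end WeightedNorm

section Boundedness

theorem exists_comp_eq_of_range_subset {𝕜 E F V : Type*} [NontriviallyNormedField 𝕜]
    [NormedAddCommGroup E] [NormedSpace 𝕜 E] [CompleteSpace E]
    [NormedAddCommGroup F] [NormedSpace 𝕜 F] [CompleteSpace F]
    [AddCommGroup V] [Module 𝕜 V] [TopologicalSpace V] [T2Space V]
    {A : E →L[𝕜] V} {J : F →L[𝕜] V} (hJ : Function.Injective J)
    (hAJ : Set.range A ⊆ Set.range J) : ∃ S : E →L[𝕜] F, J ∘L S = A := by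
  let S : E →ₗ[𝕜] F := (LinearEquiv.ofInjective J.toLinearMap hJ).symm ∘ₗ
    A.toLinearMap.codRestrict J.toLinearMap.range fun x => hAJ (Set.mem_range_self x)
  have hJS (x : E) : J (S x) = A x :=
    congrArg Subtype.val ((LinearEquiv.ofInjective J.toLinearMap hJ).apply_symm_apply _)
  have hS : Continuous S := S.continuous_of_seq_closed_graph fun u x y hu hSu => by
    have hAy : Filter.Tendsto (fun i => A (u i)) Filter.atTop (nhds (J y)) := by
      simpa only [Function.comp_def, hJS] using (J.continuous.tendsto y).comp hSu
    have hAx := (A.continuous.tendsto x).comp hu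
    exact hJ ((tendsto_nhds_unique hAy hAx).trans (hJS x).symm)
  exact ⟨⟨S, hS⟩, ContinuousLinearMap.ext hJS⟩

/-- The identification `x ↦ (√β(n) x(n))ₙ` of `ℓ²` with the coefficient sequences of `H_d`, as a
map into the space of all coefficient sequences with the topology of coefficientwise
convergence. -/
def ofL2 (d : ℕ) : lp (fun _ : Idx d => ℂ) 2 →L[ℂ] (Idx d → ℂ) :=
  .pi fun n => (√(beta d n) : ℂ) • lp.evalCLM ℂ (fun _ => ℂ) 2 n

theorem ofL2_apply (x : lp (fun _ : Idx d => ℂ) 2) (n : Idx d) :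
    ofL2 d x n = √(beta d n) * x n :=
  rfl

theorem sqrt_beta_ne_zero (n : Idx d) : (√(beta d n) : ℂ) ≠ 0 :=
  Complex.ofReal_ne_zero.2 (Real.sqrt_pos.2 (beta_pos n)).ne'

theorem ofL2_injective : Function.Injective (ofL2 d) := fun _ _ hxy =>
  lp.ext <| funext fun n => mul_left_cancel₀ (sqrt_beta_ne_zero n) (congrFun hxy n)

theorem norm_sqrt_beta_mul_sq_div_beta (n : Idx d) (w : ℂ) :
    ‖√(beta d n) * w‖ ^ 2 / beta d n = ‖w‖ ^ 2 := by
  rw [norm_mul, mul_pow, Complex.norm_real, Real.norm_eq_abs, sq_abs,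
    Real.sq_sqrt (beta_pos n).le, mul_div_cancel_left₀ _ (beta_pos n).ne']

theorem hdNorm_ofL2 (x : lp (fun _ : Idx d => ℂ) 2) : hdNorm d (ofL2 d x) = ‖x‖ := by
  simp only [hdNorm, ofL2_apply, norm_sqrt_beta_mul_sq_div_beta]
  rw [lp.norm_eq_tsum_rpow (by norm_num), Real.sqrt_eq_rpow]
  norm_num

theorem memHd_sqrt_beta_mul_iff {x : Idx d → ℂ} :
    MemHd d (fun n => √(beta d n) * x n) ↔ Memℓp x 2 := by
  rw [memℓp_gen_iff (by norm_num)]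
  simp only [MemHd, norm_sqrt_beta_mul_sq_div_beta]
  norm_num

theorem mem_range_ofL2_iff {a : Idx d → ℂ} : a ∈ Set.range (ofL2 d) ↔ MemHd d a := by
  constructor
  · rintro ⟨x, rfl⟩
    exact memHd_sqrt_beta_mul_iff.2 x.2
  · intro ha
    have hmul (n : Idx d) : √(beta d n) * (a n / √(beta d n)) = a n :=
      mul_div_cancel₀ _ (sqrt_beta_ne_zero n)
    have hx : Memℓp (fun n => a n / √(beta d n)) 2 :=
      memHd_sqrt_beta_mul_iff.1 (by simpa only [hmul] using ha)
    exact ⟨⟨_, hx⟩, funext hmul⟩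

theorem exists_hdNorm_map_le (T : (Idx d → ℂ) →L[ℂ] (Idx d → ℂ))
    (hT : ∀ a, MemHd d a → MemHd d (T a)) :
    ∃ C, 0 ≤ C ∧ ∀ a, MemHd d a → hdNorm d (T a) ≤ C * hdNorm d a := by
  have hrange : Set.range (T ∘L ofL2 d) ⊆ Set.range (ofL2 d) := by
    rintro _ ⟨x, rfl⟩
    exact mem_range_ofL2_iff.2 (hT _ (mem_range_ofL2_iff.1 ⟨x, rfl⟩))
  obtain ⟨S, hS⟩ := exists_comp_eq_of_range_subset ofL2_injective hrange
  refine ⟨‖S‖, norm_nonneg S, fun a ha => ?_⟩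
  obtain ⟨x, rfl⟩ := mem_range_ofL2_iff.2 ha
  calc hdNorm d (T (ofL2 d x))
      = hdNorm d (ofL2 d (S x)) := congrArg (hdNorm d) (DFunLike.congr_fun hS x).symm
    _ = ‖S x‖ := hdNorm_ofL2 _
    _ ≤ ‖S‖ * ‖x‖ := S.le_opNorm x
    _ = ‖S‖ * hdNorm d (ofL2 d x) := by rw [hdNorm_ofL2]

/-- Multiplication by `φ` as an operator on all coefficient sequences, continuous for
coefficientwise convergence because each coefficient of a product is a finite sum. -/
def mconvCLM (φ : Idx d → ℂ) : (Idx d → ℂ) →L[ℂ] (Idx d → ℂ) :=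
  .pi fun m => ∑ k ∈ Finset.Iic m, φ k • .proj (m - k)

theorem mconvCLM_apply (φ a : Idx d → ℂ) : mconvCLM φ a = mconv d φ a := by
  funext m
  simp [mconvCLM, mconv]

theorem IsMultiplier.exists_hdNorm_mconv_le {φ : Idx d → ℂ} (hφ : IsMultiplier d φ) :
    ∃ C, 0 ≤ C ∧ ∀ a, MemHd d a → hdNorm d (mconv d φ a) ≤ C * hdNorm d a := by
  simp only [← mconvCLM_apply]
  exact exists_hdNorm_map_le (mconvCLM φ) fun a ha => mconvCLM_apply φ a ▸ hφ a ha

end Boundedness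

/-- Let `X ⊆ ℕ^d` be monotone, `Q` a complex polynomial of `d`
variables, and `φ` a multiplier of `H_d` with `φ̂(n) = Q̂(n)` for all `n ∈ X`.  Then
`‖Q(M_z^X)‖ ≤ ‖φ‖_{M(H_d)}`, the left-hand side being the operator norm on `H_d(X)`. -/
theorem norm_QMX_le_multiplier_norm (d : ℕ) (X : Set (Idx d)) (hX : MonotoneSet d X)
    (Q : MvPolynomial (Fin d) ℂ) (φ : Idx d → ℂ) (hφ : IsMultiplier d φ)
    (hφQ : ∀ n ∈ X, φ n = Qhat d Q n) :
    opNormHdX d X (polyOp d Q (MopX d X)) ≤ multNorm d φ := by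
  refine le_csInf hφ.exists_hdNorm_mconv_le ?_
  rintro C ⟨hC, hCφ⟩
  refine csInf_le ⟨0, fun _ hB => hB.1⟩ ⟨hC, fun a ⟨ha_supp, ha⟩ => ?_⟩
  calc hdNorm d (polyOp d Q (MopX d X) a)
      = hdNorm d (X.indicator (mconv d φ a)) := by
        rw [polyOp_MopX_eq_indicator_mconv hX hφQ ha_supp]
    _ ≤ hdNorm d (mconv d φ a) := hdNorm_mono (hφ a ha) (norm_indicator_le_norm_self _)
    _ ≤ C * hdNorm d a := hCφ a ha

end DruryArveson
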